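/- arXiv:1208.0393 — 2 statements merged into one kernel-verified Lean document; each statement's English description precedes it below -/
import Mathlib

section
/- There is no completely regular code C with |C| ≥ 2 in the binary Hamming graph H(13,2) whose minimum distance is 5 or 6, and there is no completely regular code C with |C| ≥ 2 in H(16,2) whose minimum distance is 5, 7 or 8. -/
/-!
Fix a completely regular code `C` of length `n` and minimum distance `δ`. Words are encoded as
subsets of the coordinates relative to a codeword which has another codeword at distance `δ`.
Complete regularity says that the number `B (i, k)` of codewords at distance `k` from a word at
distance `i` from the code depends only on `i` and `k`. The tool is one double counting identity
(`sum_outer_flip`): the sum of `B (γ', k + 1)` over the neighbours `γ'` of a word `γ` is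
`(k + 2) * B (γ, k + 2) + (n - k) * B (γ, k)`.

A word of weight `i ≤ δ / 2` is at distance `i` from the code, so for small `i` the identity links
`B (i, δ - i)` and `B (i + 1, δ - i - 1)` (`RegCode.recurrence`), starting from `B (0, δ) > 0`.
Its divisibility consequences (equivalent to those for the designs formed by the codewords of
weight `δ`) contradict a packing bound for `(n, δ) = (13, 5), (13, 6), (16, 7)` and
`(16, 8)`.

For `(16, 5)` they give `B (2, 3) = 4`. Hence a word at distance 2 from the code has exactly
`b 2 = 2` neighbours at distance 3. The numbers `b i` of neighbours at distance `i + 1` of a word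
at distance `i` decrease strictly (`RegCode.nbrs_succ_lt`), so `b 3 ≤ 1` and the covering radius
is at most 4. Counting edges between consecutive cells (`shell_mul_eq`) expresses every cell size
through `|C|`, `p = B (3, 3) ≤ 5`, `b = b 3` and the number `c` of neighbours at distance 3 of a
word at distance 4. As the cells have `2 ^ 16` elements in total,
`137 * p * c + 80 * c + 80 * b` divides `2 ^ 16 * p * c`, which fails for all admissible values.
-/

namespace CTC

variable {m : ℕ} {Q : Type*}

/-- The automorphism of the Hamming graph `H(m,q)` given by the pair `(g, σ)`,
acting on a vertex `α` by `(α^x) i = (g (σ⁻¹ i)) (α (σ⁻¹ i))`. -/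
def toPerm (g : Fin m → Equiv.Perm Q) (σ : Equiv.Perm (Fin m)) :
    Equiv.Perm (Fin m → Q) :=
  (Equiv.piCongrRight g).trans (σ.arrowCongr (Equiv.refl Q))

@[simp] lemma toPerm_apply (g : Fin m → Equiv.Perm Q) (σ : Equiv.Perm (Fin m))
    (α : Fin m → Q) (i : Fin m) :
    toPerm g σ α i = g (σ⁻¹ i) (α (σ⁻¹ i)) := rfl

lemma toPerm_one : toPerm (fun _ : Fin m => (1 : Equiv.Perm Q)) 1 = 1 := by
  ext α i
  rfl

lemma toPerm_mul (g h : Fin m → Equiv.Perm Q) (σ τ : Equiv.Perm (Fin m)) :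
    toPerm g σ * toPerm h τ = toPerm (fun j => g (τ j) * h j) (σ * τ) := by
  ext α i
  simp [toPerm_apply, Equiv.Perm.mul_apply]

lemma toPerm_inv (g : Fin m → Equiv.Perm Q) (σ : Equiv.Perm (Fin m)) :
    (toPerm g σ)⁻¹ = toPerm (fun i => (g (σ⁻¹ i))⁻¹) σ⁻¹ := by
  rw [inv_eq_iff_mul_eq_one, toPerm_mul]
  have h1 : (fun j => g (σ⁻¹ j) * (g (σ⁻¹ j))⁻¹) = fun _ : Fin m => (1 : Equiv.Perm Q) := by
    funext j; simp
  have h2 : σ * σ⁻¹ = 1 := by simp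
  rw [show (fun j => g ((σ⁻¹ : Equiv.Perm (Fin m)) j) * (g (σ⁻¹ j))⁻¹)
      = fun _ : Fin m => (1 : Equiv.Perm Q) from h1, h2, toPerm_one]

/-- The automorphism group of the Hamming graph, as a subgroup of the
permutations of the vertex set. -/
def AutG (m : ℕ) (Q : Type*) : Subgroup (Equiv.Perm (Fin m → Q)) where
  carrier := {x | ∃ g σ, x = toPerm g σ}
  one_mem' := ⟨fun _ => 1, 1, toPerm_one.symm⟩
  mul_mem' := by
    rintro x y ⟨g, σ, rfl⟩ ⟨h, τ, rfl⟩
    exact ⟨_, _, toPerm_mul g h σ τ⟩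
  inv_mem' := by
    rintro x ⟨g, σ, rfl⟩
    exact ⟨_, _, toPerm_inv g σ⟩

/-- The base group `B` of `Aut(Γ)`: the automorphisms `(g, σ)` with `σ = 1`. -/
def BaseG (m : ℕ) (Q : Type*) : Subgroup (Equiv.Perm (Fin m → Q)) where
  carrier := {x | ∃ g, x = toPerm g 1}
  one_mem' := ⟨fun _ => 1, toPerm_one.symm⟩
  mul_mem' := by
    rintro x y ⟨g, rfl⟩ ⟨h, rfl⟩
    refine ⟨fun j => g j * h j, ?_⟩
    rw [toPerm_mul]
    simp
  inv_mem' := by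
    rintro x ⟨g, rfl⟩
    refine ⟨fun i => (g i)⁻¹, ?_⟩
    rw [toPerm_inv]
    simp

/-- The projection `μ(X)` of a subgroup `X ≤ Aut(Γ)` to the group of
permutations of the coordinates. -/
def ProjGroup (X : Subgroup (Equiv.Perm (Fin m → Q))) : Subgroup (Equiv.Perm (Fin m)) where
  carrier := {σ | ∃ g, toPerm g σ ∈ X}
  one_mem' := ⟨fun _ => 1, by rw [toPerm_one]; exact X.one_mem⟩
  mul_mem' := by
    rintro σ τ ⟨g, hg⟩ ⟨h, hh⟩
    exact ⟨fun j => g (τ j) * h j, by rw [← toPerm_mul]; exact X.mul_mem hg hh⟩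
  inv_mem' := by
    rintro σ ⟨g, hg⟩
    exact ⟨fun i => (g (σ⁻¹ i))⁻¹, by rw [← toPerm_inv]; exact X.inv_mem hg⟩

variable [DecidableEq Q]

/-- `d(γ, C)`: the distance from a vertex `γ` to the code `C`. -/
noncomputable def distTo (C : Set (Fin m → Q)) (γ : Fin m → Q) : ℕ :=
  sInf {d | ∃ β ∈ C, hammingDist γ β = d}

/-- `C_i`: the set of vertices at distance `i` from the code `C`. -/
def cell (C : Set (Fin m → Q)) (i : ℕ) : Set (Fin m → Q) :=
  {γ | distTo C γ = i}

/-- The covering radius `ρ` of the code `C`. -/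
noncomputable def covRad (C : Set (Fin m → Q)) : ℕ :=
  sSup {e | ∃ γ, distTo C γ = e}

/-- `S` is a single orbit of the subgroup `X`. -/
def IsOrbitOf (X : Subgroup (Equiv.Perm (Fin m → Q))) (S : Set (Fin m → Q)) : Prop :=
  ∃ γ, S = {β | ∃ x ∈ X, x γ = β}

/-- `C` is `(X,s)`-neighbour transitive: `C_i` is an `X`-orbit for `0 ≤ i ≤ s`. -/
def IsNT (C : Set (Fin m → Q)) (X : Subgroup (Equiv.Perm (Fin m → Q))) (s : ℕ) : Prop :=
  ∀ i ≤ s, IsOrbitOf X (cell C i)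

/-- `C` is `X`-completely transitive: `C_i` is an `X`-orbit for `0 ≤ i ≤ ρ`. -/
def IsCT (C : Set (Fin m → Q)) (X : Subgroup (Equiv.Perm (Fin m → Q))) : Prop :=
  IsNT C X (covRad C)

/-- `δ` is the minimum distance of the code `C`. -/
def IsMinDist (C : Set (Fin m → Q)) (δ : ℕ) : Prop :=
  IsLeast {d | ∃ α ∈ C, ∃ β ∈ C, α ≠ β ∧ hammingDist α β = d} δ

/-- The repetition code `Rep(m,q)`: the set of constant vertices. -/
def RepCode (m : ℕ) (Q : Type*) : Set (Fin m → Q) := {α | ∃ a, α = fun _ => a}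

/-- Two codes are equivalent if one is the image of the other under an
automorphism of the Hamming graph. -/
def CodeEquiv (C C' : Set (Fin m → Q)) : Prop :=
  ∃ x ∈ AutG m Q, ⇑x '' C = C'

/-- `Γ_k(γ)`: the set of vertices at Hamming distance `k` from `γ`. -/
def sphere (γ : Fin m → Q) (k : ℕ) : Set (Fin m → Q) := {β | hammingDist γ β = k}

/-- `C` is `s`-regular. -/
def IsSReg (C : Set (Fin m → Q)) (s : ℕ) : Prop :=
  ∀ i ≤ s, ∀ k ≤ m, ∀ γ₁ ∈ cell C i, ∀ γ₂ ∈ cell C i,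
    (sphere γ₁ k ∩ C).ncard = (sphere γ₂ k ∩ C).ncard

/-- `C` is completely regular. -/
def IsCR (C : Set (Fin m → Q)) : Prop := IsSReg C (covRad C)

end CTC

namespace CTC

open Finset
open scoped symmDiff

/-! ### Codes as families of subsets of the coordinate set -/

/-- The number of codewords at Hamming distance `k` from `γ`, where binary words are encoded as
subsets of the coordinate set and the distance is the size of the symmetric difference. -/
def outer {m : ℕ} (C : Finset (Finset (Fin m))) (γ : Finset (Fin m)) (k : ℕ) : ℕ :=
  #{β ∈ C | #(γ ∆ β) = k}

/-- The distance from the word `γ` to the code `C`, words being subsets of the coordinate set. -/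
noncomputable def codist {m : ℕ} (C : Finset (Finset (Fin m))) (γ : Finset (Fin m)) : ℕ :=
  sInf {d | ∃ β ∈ C, #(γ ∆ β) = d}

/-- A binary completely regular code of minimum distance `δ`, in subset form, translated so that
the zero word is a codeword and is at distance exactly `δ` from some other codeword. -/
structure RegCode {m : ℕ} (C : Finset (Finset (Fin m))) (δ : ℕ) : Prop where
  zero_mem : ∅ ∈ C
  sep : ∀ α ∈ C, ∀ β ∈ C, α ≠ β → δ ≤ #(α ∆ β)
  att : ∃ β ∈ C, #β = δ
  reg : ∀ γ₁ γ₂, codist C γ₁ = codist C γ₂ → ∀ k, outer C γ₁ k = outer C γ₂ k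

section Basics

variable {n : ℕ} {C : Finset (Finset (Fin n))}

theorem card_symmDiff_triangle (α β γ : Finset (Fin n)) : #(α ∆ γ) ≤ #(α ∆ β) + #(β ∆ γ) :=
  (card_le_card (symmDiff_triangle α β γ)).trans (card_union_le _ _)

theorem card_symmDiff_singleton_of_mem {S : Finset (Fin n)} {x : Fin n} (h : x ∈ S) :
    #(S ∆ {x}) + 1 = #S := by
  have : S ∆ {x} = S.erase x := by
    ext y
    simp only [mem_symmDiff, mem_singleton, mem_erase]
    grind
  rw [this, card_erase_add_one h]

theorem card_symmDiff_singleton_of_notMem {S : Finset (Fin n)} {x : Fin n} (h : x ∉ S) :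
    #(S ∆ {x}) = #S + 1 := by
  have : S ∆ {x} = insert x S := by
    ext y
    simp only [mem_symmDiff, mem_singleton, mem_insert]
    grind
  rw [this, card_insert_of_notMem h]

theorem flip_symmDiff (γ β : Finset (Fin n)) (x : Fin n) : (γ ∆ {x}) ∆ β = (γ ∆ β) ∆ {x} :=
  symmDiff_right_comm γ {x} β

theorem flip_flip (γ : Finset (Fin n)) (x : Fin n) : (γ ∆ {x}) ∆ {x} = γ := by
  rw [symmDiff_assoc, symmDiff_self, symmDiff_bot]

theorem sum_outer_flip_eq (γ : Finset (Fin n)) (k : ℕ) :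
    ∑ x, outer C (γ ∆ {x}) k = ∑ β ∈ C, #{x | #((γ ∆ β) ∆ {x}) = k} := by
  simp only [outer, card_filter, flip_symmDiff]
  rw [sum_comm]

/-- Double counting of the pairs (neighbour `γ'` of `γ`, codeword at distance `k + 1` from `γ'`):
a codeword at distance `k + 2` from `γ` is approached along `k + 2` edges at `γ`, one at distance
`k` is receded from along `n - k` edges. -/
theorem sum_outer_flip (γ : Finset (Fin n)) (k : ℕ) :
    ∑ x, outer C (γ ∆ {x}) (k + 1) = (k + 2) * outer C γ (k + 2) + (n - k) * outer C γ k := by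
  rw [sum_outer_flip_eq]
  simp only [outer, card_filter, mul_sum, ← sum_add_distrib]
  refine sum_congr rfl fun β _ => ?_
  rw [← card_filter]
  generalize γ ∆ β = S
  by_cases h2 : #S = k + 2
  · have : ({x | #(S ∆ {x}) = k + 1} : Finset (Fin n)) = S := by
      ext x
      by_cases hx : x ∈ S
      · have := card_symmDiff_singleton_of_mem hx
        simp [hx]; omega
      · have := card_symmDiff_singleton_of_notMem hx
        simp [hx]; omega
    rw [this]; simp [h2]
  by_cases h0 : #S = k
  · have : ({x | #(S ∆ {x}) = k + 1} : Finset (Fin n)) = Sᶜ := by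
      ext x
      by_cases hx : x ∈ S
      · have := card_symmDiff_singleton_of_mem hx
        simp [hx]; omega
      · have := card_symmDiff_singleton_of_notMem hx
        simp [hx]; omega
    rw [this, card_compl]; simp [h0]
  · rw [if_neg h2, if_neg h0, mul_zero, mul_zero, add_zero, card_eq_zero, filter_eq_empty_iff]
    intro x _
    by_cases hx : x ∈ S
    · have := card_symmDiff_singleton_of_mem hx
      omega
    · have := card_symmDiff_singleton_of_notMem hx
      omega

theorem sum_outer_flip_zero (γ : Finset (Fin n)) :
    ∑ x, outer C (γ ∆ {x}) 0 = outer C γ 1 := by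
  rw [sum_outer_flip_eq]
  simp only [outer, card_filter]
  refine sum_congr rfl fun β _ => ?_
  rw [← card_filter]
  generalize γ ∆ β = S
  by_cases h2 : #S = 1
  · have : ({x | #(S ∆ {x}) = 0} : Finset (Fin n)) = S := by
      ext x
      by_cases hx : x ∈ S
      · have := card_symmDiff_singleton_of_mem hx
        simp only [mem_filter_univ, hx, iff_true]; omega
      · have := card_symmDiff_singleton_of_notMem hx
        simp only [mem_filter_univ, hx, iff_false]; omega
    rw [this]; simp [h2]
  · rw [if_neg h2, card_eq_zero, filter_eq_empty_iff]
    intro x _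
    by_cases hx : x ∈ S
    · have := card_symmDiff_singleton_of_mem hx
      omega
    · have := card_symmDiff_singleton_of_notMem hx
      omega

theorem codist_le {γ β : Finset (Fin n)} (hβ : β ∈ C) : codist C γ ≤ #(γ ∆ β) :=
  Nat.sInf_le ⟨β, hβ, rfl⟩

theorem exists_codist (hC : C.Nonempty) (γ : Finset (Fin n)) :
    ∃ β ∈ C, #(γ ∆ β) = codist C γ := by
  obtain ⟨β, hβ⟩ := hC
  exact Nat.sInf_mem (s := {d | ∃ β ∈ C, #(γ ∆ β) = d}) ⟨_, β, hβ, rfl⟩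

theorem outer_pos_iff {γ : Finset (Fin n)} {k : ℕ} :
    0 < outer C γ k ↔ ∃ β ∈ C, #(γ ∆ β) = k := by
  rw [outer, card_pos]
  simp [Finset.Nonempty]

theorem outer_eq_zero_of_lt {γ : Finset (Fin n)} {k : ℕ} (h : k < codist C γ) :
    outer C γ k = 0 := by
  by_contra h0
  obtain ⟨β, hβ, hk⟩ := outer_pos_iff.1 (Nat.pos_of_ne_zero h0)
  have := codist_le (γ := γ) hβ
  omega

theorem codist_flip_le (hC : C.Nonempty) (γ : Finset (Fin n)) (x : Fin n) :
    codist C (γ ∆ {x}) ≤ codist C γ + 1 := by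
  obtain ⟨β, hβ, h⟩ := exists_codist hC γ
  refine (codist_le hβ).trans ?_
  rw [flip_symmDiff, ← h]
  by_cases hx : x ∈ γ ∆ β
  · have := card_symmDiff_singleton_of_mem hx
    omega
  · rw [card_symmDiff_singleton_of_notMem hx]

theorem le_codist_flip (hC : C.Nonempty) (γ : Finset (Fin n)) (x : Fin n) :
    codist C γ ≤ codist C (γ ∆ {x}) + 1 := by
  simpa [flip_flip] using codist_flip_le hC (γ ∆ {x}) x

theorem exists_flip_lt (hC : C.Nonempty) {γ : Finset (Fin n)} {i : ℕ} (h : codist C γ = i + 1) :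
    ∃ x, codist C (γ ∆ {x}) = i := by
  obtain ⟨β, hβ, hd⟩ := exists_codist hC γ
  obtain ⟨x, hx⟩ : (γ ∆ β).Nonempty := card_pos.1 (by omega)
  refine ⟨x, ?_⟩
  have h1 := codist_le (γ := γ ∆ {x}) hβ
  rw [flip_symmDiff] at h1
  have h2 := card_symmDiff_singleton_of_mem hx
  have h3 := le_codist_flip hC γ x
  omega

end Basics

namespace RegCode

variable {n δ : ℕ} {C : Finset (Finset (Fin n))}

theorem nonempty (hC : RegCode C δ) : C.Nonempty := ⟨_, hC.zero_mem⟩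

theorem eq_of_close (hC : RegCode C δ) {γ α β : Finset (Fin n)} (hα : α ∈ C) (hβ : β ∈ C)
    (h : #(γ ∆ α) + #(γ ∆ β) < δ) : α = β := by
  by_contra hne
  have h1 := hC.sep α hα β hβ hne
  have h2 := card_symmDiff_triangle α γ β
  rw [symmDiff_comm α γ] at h2
  omega

theorem outer_le_one (hC : RegCode C δ) (γ : Finset (Fin n)) {k : ℕ} (h : 2 * k < δ) :
    outer C γ k ≤ 1 := by
  rw [outer, card_le_one]
  intro α hα β hβ
  rw [mem_filter] at hα hβ
  exact hC.eq_of_close (γ := γ) hα.1 hβ.1 (by omega)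

theorem outer_codist_pos (hC : RegCode C δ) (γ : Finset (Fin n)) :
    0 < outer C γ (codist C γ) := outer_pos_iff.2 (exists_codist hC.nonempty γ)

theorem outer_codist (hC : RegCode C δ) {γ : Finset (Fin n)} (h : 2 * codist C γ < δ) :
    outer C γ (codist C γ) = 1 :=
  le_antisymm (hC.outer_le_one γ h) (hC.outer_codist_pos γ)

theorem outer_eq_zero (hC : RegCode C δ) {γ : Finset (Fin n)} {k : ℕ}
    (h : codist C γ + k < δ) (hk : k ≠ codist C γ) : outer C γ k = 0 := by
  by_contra h0
  obtain ⟨β, hβ, hd⟩ := outer_pos_iff.1 (Nat.pos_of_ne_zero h0)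
  obtain ⟨α, hα, hd'⟩ := exists_codist hC.nonempty γ
  have := hC.eq_of_close (γ := γ) hα hβ (by omega)
  subst this
  omega

theorem codist_eq_card (hC : RegCode C δ) {γ : Finset (Fin n)} (h : 2 * #γ ≤ δ) :
    codist C γ = #γ := by
  have h1 := codist_le (γ := γ) hC.zero_mem
  rw [← bot_eq_empty, symmDiff_bot] at h1
  obtain ⟨β, hβ, hd⟩ := exists_codist hC.nonempty γ
  by_cases h0 : β = ∅
  · subst h0
    rw [← bot_eq_empty, symmDiff_bot] at hd
    exact hd.symm
  · have h2 := hC.sep β hβ ∅ hC.zero_mem h0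
    have h3 := card_symmDiff_triangle β γ ∅
    rw [← bot_eq_empty, symmDiff_bot, symmDiff_bot, symmDiff_comm] at h3
    rw [← bot_eq_empty, symmDiff_bot] at h2
    omega

theorem le_length (hC : RegCode C δ) : δ ≤ n := by
  obtain ⟨β, -, h⟩ := hC.att
  simpa [h] using card_le_univ β

end RegCode

/-- The set of the first `i` coordinates, as a representative of the words of weight `i`. -/
def initWord (n i : ℕ) : Finset (Fin n) := {x | x.val < i}

theorem card_initWord {n i : ℕ} (h : i ≤ n) : #(initWord n i) = i := by
  simp [initWord, Fin.card_filter_val_lt, h]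

namespace RegCode

variable {n δ : ℕ} {C : Finset (Finset (Fin n))}

theorem outer_eq_init (hC : RegCode C δ) {γ : Finset (Fin n)} {i : ℕ} (hi : #γ = i)
    (h : 2 * i ≤ δ) (k : ℕ) : outer C γ k = outer C (initWord n i) k := by
  have hn : i ≤ n := by have := card_le_univ γ; simp at this; omega
  have hc := card_initWord hn
  apply hC.reg
  rw [hC.codist_eq_card (by omega), hC.codist_eq_card (by omega), hc, hi]

theorem init_eq_zero (hC : RegCode C δ) {i k : ℕ} (hi : 2 * i ≤ δ) (h : i + k < δ)
    (hk : k ≠ i) : outer C (initWord n i) k = 0 := by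
  have hc := card_initWord (n := n) (i := i) (by have := hC.le_length; omega)
  have := hC.codist_eq_card (γ := initWord n i) (by omega)
  exact hC.outer_eq_zero (by omega) (by omega)

theorem init_self (hC : RegCode C δ) {i : ℕ} (hi : 2 * i < δ) :
    outer C (initWord n i) i = 1 := by
  have hc := card_initWord (n := n) (i := i) (by have := hC.le_length; omega)
  have := hC.codist_eq_card (γ := initWord n i) (by omega)
  have h := hC.outer_codist (γ := initWord n i) (by omega)
  rwa [this, hc] at h

theorem init_zero_pos (hC : RegCode C δ) : 0 < outer C (initWord n 0) δ := by
  obtain ⟨β, hβ, h⟩ := hC.att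
  refine outer_pos_iff.2 ⟨β, hβ, ?_⟩
  have : initWord n 0 = ⊥ := by simp [initWord]
  rw [this, bot_symmDiff, h]

/-- The double counting identity at a word of weight `i` with `2 (i + 1) ≤ δ`, whose neighbours
are the `i` words of weight `i - 1` and the `n - i` words of weight `i + 1`. -/
theorem recurrence (hC : RegCode C δ) {i : ℕ} (hi : 2 * (i + 1) ≤ δ) (k : ℕ) :
    i * outer C (initWord n (i - 1)) (k + 1) + (n - i) * outer C (initWord n (i + 1)) (k + 1) =
      (k + 2) * outer C (initWord n i) (k + 2) + (n - k) * outer C (initWord n i) k := by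
  have hc := card_initWord (n := n) (i := i) (by have := hC.le_length; omega)
  rw [← sum_outer_flip, ← sum_add_sum_compl (initWord n i)]
  congr 1
  · rw [sum_congr rfl (g := fun _ => outer C (initWord n (i - 1)) (k + 1)), sum_const, hc,
      smul_eq_mul]
    intro x hx
    have := card_symmDiff_singleton_of_mem hx
    exact hC.outer_eq_init (by omega) (by omega) _
  · rw [sum_congr rfl (g := fun _ => outer C (initWord n (i + 1)) (k + 1)), sum_const, card_compl,
      hc, smul_eq_mul, Fintype.card_fin]
    intro x hx
    have := card_symmDiff_singleton_of_notMem (mem_compl.1 hx)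
    exact hC.outer_eq_init (by omega) (by omega) _

/-- Packing bound for `δ = 2 e + 1`, where `e = k + 1`: around a word at distance `e` from the
code, the codewords at distance `e + 1` use disjoint sets of neighbours, all of which move away
from the nearest codeword. -/
theorem packing_odd (hC : RegCode C δ) {k : ℕ} (hk : δ = 2 * k + 3) :
    (k + 2) * outer C (initWord n (k + 1)) (k + 2) ≤ n - (k + 1) := by
  have hc := card_initWord (n := n) (i := k + 1) (by have := hC.le_length; omega)
  have h := sum_outer_flip (C := C) (initWord n (k + 1)) k
  rw [← sum_add_sum_compl (initWord n (k + 1)), sum_eq_zero] at h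
  · have h2 : ∑ x ∈ (initWord n (k + 1))ᶜ, outer C (initWord n (k + 1) ∆ {x}) (k + 1) ≤
        ∑ x ∈ (initWord n (k + 1))ᶜ, 1 :=
      sum_le_sum fun x _ => hC.outer_le_one _ (by omega)
    rw [sum_const, card_compl, hc, Fintype.card_fin, smul_eq_mul, mul_one] at h2
    omega
  · intro x hx
    have := card_symmDiff_singleton_of_mem hx
    have h1 := hC.codist_eq_card (γ := initWord n (k + 1) ∆ {x}) (by omega)
    exact hC.outer_eq_zero (by omega) (by omega)

/-- Packing bound: the codewords at distance `k + 2` from a word use disjoint sets of neighbours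
as soon as `2 (k + 1) < δ`. -/
theorem packing (hC : RegCode C δ) {k : ℕ} (hk : 2 * (k + 1) < δ) (γ : Finset (Fin n)) :
    (k + 2) * outer C γ (k + 2) ≤ n := by
  have h := sum_outer_flip (C := C) γ k
  have h2 : ∑ x, outer C (γ ∆ {x}) (k + 1) ≤ ∑ x : Fin n, 1 :=
      sum_le_sum fun x _ => hC.outer_le_one _ (by omega)
  simp only [sum_const, card_univ, Fintype.card_fin, smul_eq_mul, mul_one] at h2
  omega

end RegCode

/-! ### The cases excluded by divisibility -/

/-- With `λ = B (2, 3)` the relations give `39 λ = 5 B (0, 5)`, so `5 ∣ λ`, but `3 λ ≤ 11`. -/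
theorem not_regCode_13_5 {C : Finset (Finset (Fin 13))} : ¬ RegCode C 5 := by
  intro hC
  have h0 := hC.init_zero_pos
  have h1 := hC.recurrence (i := 0) (by norm_num) 3
  have h2 := hC.recurrence (i := 1) (by norm_num) 2
  have z1 := hC.init_eq_zero (i := 0) (k := 3) (by norm_num) (by norm_num) (by norm_num)
  have z2 := hC.init_eq_zero (i := 1) (k := 2) (by norm_num) (by norm_num) (by norm_num)
  have hp := hC.packing_odd (k := 1) (by norm_num)
  norm_num at h0 h1 h2 z1 z2 hp
  omega

/-- With `λ = B (3, 3) - 1` the relations give `20 ∣ λ` and `λ > 0`, but `3 (λ + 1) ≤ 13`. -/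
theorem not_regCode_13_6 {C : Finset (Finset (Fin 13))} : ¬ RegCode C 6 := by
  intro hC
  have h0 := hC.init_zero_pos
  have h1 := hC.recurrence (i := 0) (by norm_num) 4
  have h2 := hC.recurrence (i := 1) (by norm_num) 3
  have h3 := hC.recurrence (i := 2) (by norm_num) 2
  have z1 := hC.init_eq_zero (i := 0) (k := 4) (by norm_num) (by norm_num) (by norm_num)
  have z2 := hC.init_eq_zero (i := 1) (k := 3) (by norm_num) (by norm_num) (by norm_num)
  have z4 := hC.init_self (i := 2) (by norm_num)
  have hp := hC.packing (k := 1) (by norm_num) (initWord 13 3)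
  norm_num at h0 h1 h2 h3 z1 z2 z4 hp
  omega

/-- With `λ = B (3, 4)` the relations give `5 ∣ λ` and `λ > 0`, but `4 λ ≤ 13`. -/
theorem not_regCode_16_7 {C : Finset (Finset (Fin 16))} : ¬ RegCode C 7 := by
  intro hC
  have h0 := hC.init_zero_pos
  have h1 := hC.recurrence (i := 0) (by norm_num) 5
  have h2 := hC.recurrence (i := 1) (by norm_num) 4
  have h3 := hC.recurrence (i := 2) (by norm_num) 3
  have z1 := hC.init_eq_zero (i := 0) (k := 5) (by norm_num) (by norm_num) (by norm_num)
  have z2 := hC.init_eq_zero (i := 1) (k := 4) (by norm_num) (by norm_num) (by norm_num)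
  have z3 := hC.init_eq_zero (i := 2) (k := 3) (by norm_num) (by norm_num) (by norm_num)
  have hp := hC.packing_odd (k := 2) (by norm_num)
  norm_num at h0 h1 h2 h3 z1 z2 z3 hp
  omega

/-- With `λ = B (4, 4) - 1` the relations give `5 ∣ λ` and `λ > 0`, but `4 (λ + 1) ≤ 16`. -/
theorem not_regCode_16_8 {C : Finset (Finset (Fin 16))} : ¬ RegCode C 8 := by
  intro hC
  have h0 := hC.init_zero_pos
  have h1 := hC.recurrence (i := 0) (by norm_num) 6
  have h2 := hC.recurrence (i := 1) (by norm_num) 5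
  have h3 := hC.recurrence (i := 2) (by norm_num) 4
  have h4 := hC.recurrence (i := 3) (by norm_num) 3
  have z1 := hC.init_eq_zero (i := 0) (k := 6) (by norm_num) (by norm_num) (by norm_num)
  have z2 := hC.init_eq_zero (i := 1) (k := 5) (by norm_num) (by norm_num) (by norm_num)
  have z3 := hC.init_eq_zero (i := 2) (k := 4) (by norm_num) (by norm_num) (by norm_num)
  have z4 := hC.init_self (i := 3) (by norm_num)
  have hp := hC.packing (k := 2) (by norm_num) (initWord 16 4)
  norm_num at h0 h1 h2 h3 h4 z1 z2 z3 z4 hp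
  omega

/-! ### Length 16 and minimum distance 5 -/

/-- The number of neighbours of `γ` at distance `j` from the code. -/
noncomputable def nbrs {n : ℕ} (C : Finset (Finset (Fin n))) (γ : Finset (Fin n)) (j : ℕ) : ℕ :=
  #{x | codist C (γ ∆ {x}) = j}

/-- The number of words at distance `i` from the code. -/
noncomputable def shell {n : ℕ} (C : Finset (Finset (Fin n))) (i : ℕ) : ℕ :=
  #{γ | codist C γ = i}

/-- Edges between two cells, counted from either end. -/
theorem shell_mul_eq {n : ℕ} {C : Finset (Finset (Fin n))} {i j u v : ℕ}
    (hu : ∀ γ, codist C γ = i → nbrs C γ j = u) (hv : ∀ γ, codist C γ = j → nbrs C γ i = v) :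
    shell C i * u = shell C j * v := by
  have key : ∀ a b w : ℕ, (∀ γ, codist C γ = a → nbrs C γ b = w) →
      shell C a * w = ∑ x : Fin n, #{γ | codist C γ = a ∧ codist C (γ ∆ {x}) = b} := by
    intro a b w h
    rw [shell, ← smul_eq_mul, ← sum_const,
      ← sum_congr rfl fun γ hγ => h γ (mem_filter_univ γ |>.1 hγ)]
    simp only [nbrs, card_filter]
    rw [sum_comm]
    refine sum_congr rfl fun x _ => ?_
    rw [sum_filter]
    refine sum_congr rfl fun γ _ => ?_
    by_cases h1 : codist C γ = a <;> simp [h1]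
  rw [key i j u hu, key j i v hv]
  refine sum_congr rfl fun x _ => ?_
  refine card_bij' (fun γ _ => γ ∆ {x}) (fun γ _ => γ ∆ {x}) ?_ ?_ ?_ ?_ <;>
    simp +contextual

theorem sum_ite_codist {n : ℕ} {C : Finset (Finset (Fin n))} (γ : Finset (Fin n)) (j w : ℕ) :
    ∑ x, (if codist C (γ ∆ {x}) = j then w else 0) = w * nbrs C γ j := by
  rw [← sum_filter, sum_const, nbrs, smul_eq_mul, mul_comm]

namespace RegCode

variable {C : Finset (Finset (Fin 16))}

/-- Words at distance 2 from the code have exactly 4 codewords at distance 3. -/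
theorem outer_two_three (hC : RegCode C 5) {γ : Finset (Fin 16)} (hγ : codist C γ = 2) :
    outer C γ 3 = 4 := by
  have h : outer C γ 3 = outer C (initWord 16 2) 3 := by
    refine hC.reg _ _ ?_ _
    rw [hγ, hC.codist_eq_card] <;> rw [card_initWord] <;> norm_num
  have h0 := hC.init_zero_pos
  have h1 := hC.recurrence (i := 0) (by norm_num) 3
  have h2 := hC.recurrence (i := 1) (by norm_num) 2
  have z1 := hC.init_eq_zero (i := 0) (k := 3) (by norm_num) (by norm_num) (by norm_num)
  have z2 := hC.init_eq_zero (i := 1) (k := 2) (by norm_num) (by norm_num) (by norm_num)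
  have hp := hC.packing_odd (k := 1) (by norm_num)
  norm_num at h0 h1 h2 z1 z2 hp
  omega

theorem outer_eq_ite (hC : RegCode C 5) (γ : Finset (Fin 16)) {k : ℕ} (hk : k ≤ 2) :
    outer C γ k = if codist C γ = k then 1 else 0 := by
  split_ifs with h
  · subst h
    exact hC.outer_codist (by omega)
  · rcases lt_or_gt_of_ne h with h | h
    · exact hC.outer_eq_zero (by omega) (by omega)
    · exact outer_eq_zero_of_lt h

theorem outer_three (hC : RegCode C 5) {p : ℕ} (hp : ∀ γ, codist C γ = 3 → outer C γ 3 = p)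
    (γ : Finset (Fin 16)) : outer C γ 3 =
      (if codist C γ = 2 then 4 else 0) + (if codist C γ = 3 then p else 0) := by
  by_cases h2 : codist C γ = 2
  · simp [h2, hC.outer_two_three h2]
  by_cases h3 : codist C γ = 3
  · simp [h3, hp γ h3]
  rw [if_neg h2, if_neg h3]
  by_cases h : 3 < codist C γ
  · exact outer_eq_zero_of_lt h
  · exact hC.outer_eq_zero (by omega) (by omega)

theorem nbrs_zero (hC : RegCode C 5) (γ : Finset (Fin 16)) : nbrs C γ 0 = outer C γ 1 := by
  rw [← sum_outer_flip_zero, ← one_mul (nbrs C γ 0), ← sum_ite_codist]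
  exact sum_congr rfl fun x _ => (hC.outer_eq_ite _ (by norm_num)).symm

theorem nbrs_one (hC : RegCode C 5) (γ : Finset (Fin 16)) :
    nbrs C γ 1 = 2 * outer C γ 2 + 16 * outer C γ 0 := by
  rw [← sum_outer_flip γ 0, ← one_mul (nbrs C γ 1), ← sum_ite_codist]
  exact sum_congr rfl fun x _ => (hC.outer_eq_ite _ (by norm_num)).symm

theorem nbrs_two (hC : RegCode C 5) (γ : Finset (Fin 16)) :
    nbrs C γ 2 = 3 * outer C γ 3 + 15 * outer C γ 1 := by
  rw [← sum_outer_flip γ 1, ← one_mul (nbrs C γ 2), ← sum_ite_codist]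
  exact sum_congr rfl fun x _ => (hC.outer_eq_ite _ (by norm_num)).symm

theorem nbrs_three (hC : RegCode C 5) {p : ℕ} (hp : ∀ γ, codist C γ = 3 → outer C γ 3 = p)
    (γ : Finset (Fin 16)) :
    4 * nbrs C γ 2 + p * nbrs C γ 3 = 4 * outer C γ 4 + 14 * outer C γ 2 := by
  rw [← sum_outer_flip γ 2, ← sum_ite_codist, ← sum_ite_codist, ← sum_add_distrib]
  exact sum_congr rfl fun x _ => (hC.outer_three hp _).symm

/-- The neighbours of a word at distance `i + 1` are at distance `i`, `i + 1` or `i + 2`. -/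
theorem nbrs_total {n δ : ℕ} {C : Finset (Finset (Fin n))} (hC : RegCode C δ)
    {γ : Finset (Fin n)} {i : ℕ} (hγ : codist C γ = i + 1) :
    nbrs C γ i + nbrs C γ (i + 1) + nbrs C γ (i + 2) = n := by
  simp only [nbrs, card_filter, ← sum_add_distrib]
  rw [sum_congr rfl (g := fun _ => 1)]
  · simp
  · intro x _
    have h1 := le_codist_flip hC.nonempty γ x
    have h2 := codist_flip_le hC.nonempty γ x
    have : codist C (γ ∆ {x}) = i ∨ codist C (γ ∆ {x}) = i + 1 ∨ codist C (γ ∆ {x}) = i + 2 := by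
      omega
    rcases this with h | h | h <;> simp [h]

theorem exists_codist_eq (hC : RegCode C 5) {i : ℕ} (hi : 2 * i ≤ 5) :
    ∃ γ, codist C γ = i := by
  have hc := card_initWord (n := 16) (i := i) (by omega)
  exact ⟨_, (hC.codist_eq_card (γ := initWord 16 i) (by omega)).trans hc⟩

theorem nbrs_three_of_two (hC : RegCode C 5) {γ : Finset (Fin 16)} (hγ : codist C γ = 2) :
    nbrs C γ 3 = 2 := by
  have h1 := hC.nbrs_one γ
  have h2 := hC.nbrs_two γ
  have h3 := hC.nbrs_total (γ := γ) (i := 1) hγ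
  rw [hC.outer_two_three hγ] at h2
  rw [hC.outer_eq_ite γ (by norm_num), hγ] at h1 h2
  rw [hC.outer_eq_ite γ (by norm_num), hγ] at h1
  norm_num at h1 h2 h3
  omega

/-- The numbers `b i` of neighbours one step further from the code decrease strictly: if `γ` is
obtained from `γ'` by flipping `e` and moves away from the code, then every coordinate `f` moving
`γ` away also moves `γ'` away, and so does `e`, which is not one of them. -/
theorem nbrs_succ_lt {n δ : ℕ} {C : Finset (Finset (Fin n))} (hC : RegCode C δ)
    {γ : Finset (Fin n)} {i : ℕ} (hγ : codist C γ = i + 1) :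
    ∃ γ', codist C γ' = i ∧ nbrs C γ (i + 2) < nbrs C γ' (i + 1) := by
  obtain ⟨e, he⟩ := exists_flip_lt hC.nonempty hγ
  refine ⟨γ ∆ {e}, he, card_lt_card ?_⟩
  rw [ssubset_iff_of_subset]
  · refine ⟨e, ?_, ?_⟩
    · simp [hγ]
    · simp [he]
  · intro f hf
    rw [mem_filter_univ] at hf ⊢
    have h1 := codist_flip_le hC.nonempty (γ ∆ {e}) f
    have h2 := le_codist_flip hC.nonempty (γ ∆ {f}) e
    rw [symmDiff_right_comm γ {f} {e}] at h2
    omega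

/-- The covering radius is at most 4, since `b 2 = 2` and the `b i` decrease strictly. -/
theorem codist_le_four (hC : RegCode C 5) (γ : Finset (Fin 16)) : codist C γ ≤ 4 := by
  have hb3 : ∀ γ, codist C γ = 3 → nbrs C γ 4 ≤ 1 := by
    intro γ hγ
    obtain ⟨γ', h, hlt⟩ := hC.nbrs_succ_lt (i := 2) hγ
    rw [hC.nbrs_three_of_two h] at hlt
    norm_num at hlt
    omega
  have hb4 : ∀ γ, codist C γ = 4 → nbrs C γ 5 = 0 := by
    intro γ hγ
    obtain ⟨γ', h, hlt⟩ := hC.nbrs_succ_lt (i := 3) hγ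
    have := hb3 γ' h
    norm_num at hlt
    omega
  have key : ∀ i γ, codist C γ ≠ i + 5 := by
    intro i
    induction i with
    | zero =>
      intro γ hγ
      obtain ⟨e, he⟩ := exists_flip_lt hC.nonempty hγ
      have := hb4 _ he
      rw [nbrs, card_eq_zero, filter_eq_empty_iff] at this
      exact this (mem_univ e) (by rwa [flip_flip])
    | succ i ih =>
      intro γ hγ
      obtain ⟨e, he⟩ := exists_flip_lt (i := i + 5) hC.nonempty (by omega)
      exact ih _ he
  by_contra h
  exact key (codist C γ - 5) γ (by omega)

theorem shell_total (hC : RegCode C 5) :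
    shell C 0 + shell C 1 + shell C 2 + shell C 3 + shell C 4 = 65536 := by
  simp only [shell, card_filter, ← sum_add_distrib]
  rw [sum_congr rfl (g := fun _ => 1)]
  · simp
  · intro γ _
    have := hC.codist_le_four γ
    have : codist C γ = 0 ∨ codist C γ = 1 ∨ codist C γ = 2 ∨ codist C γ = 3 ∨
      codist C γ = 4 := by omega
    rcases this with h | h | h | h | h <;> simp [h]

end RegCode

/-- The cell sizes `s i` satisfy `16 s 0 = s 1`, `15 s 1 = 2 s 2`, `2 s 2 = 3 p s 3` and
`b s 3 = c s 4`, and no admissible `p`, `b`, `c` makes their sum equal to `2 ^ 16`. -/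
theorem not_regCode_16_5 {C : Finset (Finset (Fin 16))} : ¬ RegCode C 5 := by
  intro hC
  obtain ⟨γ₂, hγ₂⟩ := hC.exists_codist_eq (i := 2) (by norm_num)
  -- The cell at distance 3 is not empty, because `b 2 = 2`.
  obtain ⟨γ₃, hγ₃⟩ : ∃ γ, codist C γ = 3 := by
    have h := hC.nbrs_three_of_two hγ₂
    obtain ⟨x, hx⟩ : Finset.Nonempty {x | codist C (γ₂ ∆ {x}) = 3} := by
      rw [← card_pos]; unfold nbrs at h; omega
    exact ⟨_, mem_filter_univ x |>.1 hx⟩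
  obtain ⟨p, hp₃⟩ : ∃ p, p = outer C γ₃ 3 := ⟨_, rfl⟩
  have hp : ∀ γ, codist C γ = 3 → outer C γ 3 = p := fun γ hγ => by
    rw [hp₃]; exact hC.reg _ _ (hγ.trans hγ₃.symm) 3
  have hp1 : 0 < p := by rw [hp₃, ← hγ₃]; exact hC.outer_codist_pos γ₃
  have hp5 : 3 * p ≤ 16 := by rw [hp₃]; exact hC.packing (k := 1) (by norm_num) γ₃
  -- Intersection numbers at distance 3.
  have h32 : ∀ γ, codist C γ = 3 → nbrs C γ 2 = 3 * p := by
    intro γ hγ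
    have := hC.nbrs_two γ
    rw [hp γ hγ, outer_eq_zero_of_lt (k := 1) (by omega)] at this
    omega
  obtain ⟨b, hb⟩ : ∃ b, b = nbrs C γ₃ 4 := ⟨_, rfl⟩
  have h34 : ∀ γ, codist C γ = 3 → nbrs C γ 4 = b := by
    intro γ hγ
    have e1 := hC.nbrs_three hp γ
    have e2 := hC.nbrs_three hp γ₃
    have t1 := hC.nbrs_total (i := 2) hγ
    have t2 := hC.nbrs_total (i := 2) hγ₃
    rw [h32 γ hγ, outer_eq_zero_of_lt (k := 2) (by omega)] at e1
    rw [h32 γ₃ hγ₃, outer_eq_zero_of_lt (k := 2) (by omega)] at e2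
    rw [hC.reg γ γ₃ (hγ.trans hγ₃.symm) 4] at e1
    have e3 : nbrs C γ 3 = nbrs C γ₃ 3 := Nat.eq_of_mul_eq_mul_left hp1 (by omega)
    rw [h32 γ hγ] at t1
    rw [h32 γ₃ hγ₃] at t2
    norm_num at t1 t2
    omega
  have hb1 : b ≤ 1 := by
    obtain ⟨γ', h, hlt⟩ := hC.nbrs_succ_lt (i := 2) hγ₃
    rw [hC.nbrs_three_of_two h] at hlt
    norm_num at hlt
    omega
  -- The cell at distance 4 may be empty, and then any value of `c` will do.
  obtain ⟨c, hc1, hc16, h43⟩ : ∃ c, 0 < c ∧ c ≤ 16 ∧ ∀ γ, codist C γ = 4 → nbrs C γ 3 = c := by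
    by_cases h4 : ∃ γ, codist C γ = 4
    · obtain ⟨γ₄, hγ₄⟩ := h4
      refine ⟨nbrs C γ₄ 3, ?_, ?_, ?_⟩
      · obtain ⟨x, hx⟩ := exists_flip_lt hC.nonempty hγ₄
        exact card_pos.2 ⟨x, by simp [hx]⟩
      · exact (card_le_univ _).trans (by simp)
      · intro γ hγ
        have e : ∀ γ, codist C γ = 4 → p * nbrs C γ 3 = 4 * outer C γ 4 := by
          intro γ hγ
          have e1 := hC.nbrs_three hp γ
          rw [hC.nbrs_two γ, outer_eq_zero_of_lt (k := 3) (by omega),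
            outer_eq_zero_of_lt (k := 2) (by omega),
            outer_eq_zero_of_lt (k := 1) (by omega)] at e1
          omega
        refine Nat.eq_of_mul_eq_mul_left hp1 ?_
        rw [e γ hγ, e γ₄ hγ₄, hC.reg γ γ₄ (hγ.trans hγ₄.symm) 4]
    · exact ⟨1, by norm_num, by norm_num, fun γ hγ => absurd ⟨γ, hγ⟩ h4⟩
  have s01 : shell C 0 * 16 = shell C 1 * 1 := by
    refine shell_mul_eq (fun γ hγ => ?_) (fun γ hγ => ?_)
    · rw [hC.nbrs_one, hC.outer_eq_ite γ (by norm_num), hC.outer_eq_ite γ (by norm_num), hγ]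
      norm_num
    · rw [hC.nbrs_zero, hC.outer_eq_ite γ (by norm_num), hγ]
      norm_num
  have s12 : shell C 1 * 15 = shell C 2 * 2 := by
    refine shell_mul_eq (fun γ hγ => ?_) (fun γ hγ => ?_)
    · rw [hC.nbrs_two, hC.outer_eq_zero (k := 3) (by omega) (by omega),
        hC.outer_eq_ite γ (by norm_num), hγ]
      norm_num
    · rw [hC.nbrs_one, hC.outer_eq_ite γ (by norm_num), hC.outer_eq_ite γ (by norm_num), hγ]
      norm_num
  have s23 : shell C 2 * 2 = shell C 3 * (3 * p) :=
    shell_mul_eq (fun γ hγ => hC.nbrs_three_of_two hγ) h32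
  have s34 : shell C 3 * b = shell C 4 * c := shell_mul_eq h34 h43
  have tot := hC.shell_total
  have s3 : shell C 3 * p = 80 * shell C 0 := by linarith
  have dvd : 137 * p * c + 80 * c + 80 * b ∣ 65536 * p * c := by
    refine ⟨shell C 0, ?_⟩
    have t : shell C 0 + 16 * shell C 0 + 120 * shell C 0 + shell C 3 + shell C 4 = 65536 := by
      omega
    rw [← t]
    linear_combination (c + b) * s3 - p * s34
  have arith : ∀ p < 6, ∀ b < 2, ∀ c < 17, 0 < p → 0 < c →
      ¬ 137 * p * c + 80 * c + 80 * b ∣ 65536 * p * c := by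
    decide +kernel
  exact arith p (by omega) b (by omega) c (by omega) hp1 hc1 dvd

/-! ### From words over a two-letter alphabet to subsets -/

section Transport

variable {n : ℕ} {Q : Type*} [DecidableEq Q]

/-- The subset encoding of a word `γ` relative to a base word `α`: the set of coordinates where
the two differ. -/
def diffSet (α γ : Fin n → Q) : Finset (Fin n) := {i | γ i ≠ α i}

theorem hammingDist_eq_card (hQ : Nat.card Q = 2) (α γ β : Fin n → Q) :
    #(diffSet α γ ∆ diffSet α β) = hammingDist γ β := by
  obtain ⟨x, y, hxy, huniv⟩ := Nat.card_eq_two_iff.1 hQ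
  rw [hammingDist]
  congr 1
  ext i
  have h : ∀ q : Q, q = x ∨ q = y := fun q => by
    have : q ∈ ({x, y} : Set Q) := huniv ▸ Set.mem_univ q
    simpa using this
  simp only [diffSet, mem_symmDiff, mem_filter_univ]
  rcases h (γ i) with h1 | h1 <;> rcases h (α i) with h2 | h2 <;> rcases h (β i) with h3 | h3 <;>
    simp [h1, h2, h3, hxy, hxy.symm]

theorem diffSet_injective (hQ : Nat.card Q = 2) (α : Fin n → Q) :
    Function.Injective (diffSet α) := by
  intro γ β h
  rw [← hammingDist_eq_zero, ← hammingDist_eq_card hQ α, h, symmDiff_self]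
  rfl

theorem diffSet_surjective (hQ : Nat.card Q = 2) (α : Fin n → Q) :
    Function.Surjective (diffSet α) := by
  intro S
  obtain ⟨x, y, hxy, -⟩ := Nat.card_eq_two_iff.1 hQ
  have h : ∀ q : Q, ∃ q', q' ≠ q := fun q => by
    by_cases hq : x = q
    · exact ⟨y, fun h => hxy (hq.trans h.symm)⟩
    · exact ⟨x, hq⟩
  choose g hg using h
  refine ⟨fun i => if i ∈ S then g (α i) else α i, ?_⟩
  ext i
  by_cases hi : i ∈ S <;> simp [diffSet, hi, hg]

/-- A completely regular code over a two-letter alphabet yields a `RegCode`, by encoding words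
relative to a codeword `α` that attains the minimum distance. -/
theorem exists_regCode [Fintype Q] (hQ : Fintype.card Q = 2) {C : Set (Fin n → Q)} {δ : ℕ}
    (hδ : IsMinDist C δ) (hC : IsCR C) : ∃ C' : Finset (Finset (Fin n)), RegCode C' δ := by
  classical
  rw [← Nat.card_eq_fintype_card] at hQ
  obtain ⟨⟨α, hα, β₀, hβ₀, -, hd⟩, hmin⟩ := hδ
  let C' : Finset (Finset (Fin n)) := {S | ∃ β ∈ C, diffSet α β = S}
  have hC' : ∀ S, S ∈ C' ↔ ∃ β ∈ C, diffSet α β = S := fun S => mem_filter_univ S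
  have hself : diffSet α α = ∅ := by simp [diffSet]
  have hdist : ∀ γ, codist C' (diffSet α γ) = distTo C γ := by
    intro γ
    rw [codist, distTo]
    congr 1
    ext d
    constructor
    · rintro ⟨S, hS, rfl⟩
      obtain ⟨β, hβ, rfl⟩ := (hC' S).1 hS
      exact ⟨β, hβ, (hammingDist_eq_card hQ α γ β).symm⟩
    · rintro ⟨β, hβ, rfl⟩
      exact ⟨_, (hC' _).2 ⟨β, hβ, rfl⟩, hammingDist_eq_card hQ α γ β⟩
  have hout : ∀ γ k, outer C' (diffSet α γ) k = (sphere γ k ∩ C).ncard := by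
    intro γ k
    rw [outer, ← Set.ncard_coe_finset, ← Set.ncard_image_of_injective _ (diffSet_injective hQ α)]
    congr 1
    ext S
    simp only [coe_filter, Set.mem_ofPred_eq, Set.mem_image, Set.mem_inter_iff, sphere, hC']
    constructor
    · rintro ⟨⟨β, hβ, rfl⟩, h⟩
      exact ⟨β, ⟨by rw [← h, hammingDist_eq_card hQ], hβ⟩, rfl⟩
    · rintro ⟨β, ⟨h, hβ⟩, rfl⟩
      exact ⟨⟨β, hβ, rfl⟩, by rw [← h, hammingDist_eq_card hQ]⟩
  refine ⟨C', (hC' _).2 ⟨α, hα, hself⟩, ?_, ?_, ?_⟩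
  · intro S hS T hT hne
    obtain ⟨β, hβ, rfl⟩ := (hC' S).1 hS
    obtain ⟨γ, hγ, rfl⟩ := (hC' T).1 hT
    exact hmin ⟨β, hβ, γ, hγ, fun h => hne (by rw [h]), (hammingDist_eq_card hQ α β γ).symm⟩
  · refine ⟨_, (hC' _).2 ⟨β₀, hβ₀, rfl⟩, ?_⟩
    rw [← hd, ← hammingDist_eq_card hQ α, hself, ← bot_eq_empty, bot_symmDiff]
  · intro S T hST k
    obtain ⟨γ₁, rfl⟩ := diffSet_surjective hQ α S
    obtain ⟨γ₂, rfl⟩ := diffSet_surjective hQ α T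
    rw [hdist, hdist] at hST
    rw [hout, hout]
    by_cases hk : k ≤ n
    · refine hC (distTo C γ₁) ?_ k hk γ₁ rfl γ₂ hST.symm
      exact le_csSup (Set.finite_range (distTo C)).bddAbove ⟨γ₁, rfl⟩
    · have h : ∀ γ : Fin n → Q, sphere γ k = ∅ := by
        intro γ
        ext β
        have := hammingDist_le_card_fintype (x := γ) (y := β)
        simp only [Fintype.card_fin] at this
        simp only [sphere, Set.mem_ofPred_eq, Set.mem_empty_iff_false, iff_false]
        omega
      rw [h, h]

end Transport

end CTC

open CTC in
/-- Lemma 2.15: there are no binary completely regular codes of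
length 13 with minimum distance 5 or 6, nor of length 16 with minimum
distance 5, 7 or 8. -/
theorem statement13 {Q : Type*} [Fintype Q] [DecidableEq Q]
    (hcard : Fintype.card Q = 2) :
    (∀ (C : Set (Fin 13 → Q)) (δ : ℕ), 2 ≤ C.ncard → IsMinDist C δ →
      (δ = 5 ∨ δ = 6) → ¬ IsCR C) ∧
    (∀ (C : Set (Fin 16 → Q)) (δ : ℕ), 2 ≤ C.ncard → IsMinDist C δ →
      (δ = 5 ∨ δ = 7 ∨ δ = 8) → ¬ IsCR C) := by
  refine ⟨fun C δ _ hδ h hC => ?_, fun C δ _ hδ h hC => ?_⟩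
  · obtain ⟨C', hC'⟩ := exists_regCode hcard hδ hC
    rcases h with rfl | rfl
    · exact not_regCode_13_5 hC'
    · exact not_regCode_13_6 hC'
  · obtain ⟨C', hC'⟩ := exists_regCode hcard hδ hC
    rcases h with rfl | rfl | rfl
    · exact not_regCode_16_5 hC'
    · exact not_regCode_16_7 hC'
    · exact not_regCode_16_8 hC'
end

section
/- Let C be an X-completely transitive code in H(m,q) with |C| > 1, X ∩ B = 1, minimum distance δ ≥ 5, and suppose μ(X) equals the alternating group Alt(Fin m) or the symmetric group Sym(Fin m). Then q = 2, μ(X) = Sym(Fin m), C is equivalent to the binary repetition code Rep(m,2), and for each α ∈ C the stabilizer X_α = {x ∈ X : α^x = α} satisfies μ(X_α) = Alt(Fin m). -/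
namespace CTC

/-! ### Arithmetic and alternating groups -/

lemma factorial_lt_pow (n : ℕ) (hn : 4 ≤ n) : (n + 2).factorial < n ^ (n + 1) := by
  induction n, hn using Nat.le_induction with
  | base => decide
  | succ n hn ih =>
    -- Bernoulli: `(n + 1) ^ (n + 1) ≥ 2 * n ^ (n + 1)`
    have h1 : 2 * n ^ (n + 1) ≤ (n + 1) ^ (n + 1) := by
      have h := pow_add_mul_le_add_pow_of_sq_nonneg (a := n) (b := 1) (Nat.zero_le _)
        (Nat.zero_le _) (Nat.zero_le _) (Nat.zero_le _) (n + 1)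
      simp only [Nat.add_sub_cancel, Nat.cast_id, mul_one] at h
      have h' : n ^ (n + 1) = n * n ^ n := pow_succ' n n
      nlinarith [Nat.zero_le (n ^ n)]
    calc (n + 1 + 2).factorial = (n + 3) * (n + 2).factorial := Nat.factorial_succ _
      _ < (n + 3) * n ^ (n + 1) := by gcongr
      _ ≤ (n + 1) * (2 * n ^ (n + 1)) := by nlinarith [Nat.zero_le (n ^ (n + 1))]
      _ ≤ (n + 1) * (n + 1) ^ (n + 1) := by gcongr
      _ = (n + 1) ^ (n + 1 + 1) := by ring

/-- By simplicity and order, an alternating group of degree `n ≥ 5` acts trivially on fewer than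
`n` points. -/
lemma alternating_hom_trivial {α β : Type*} [Fintype α] [DecidableEq α] [Fintype β]
    (h5 : 5 ≤ Fintype.card α) (hlt : Fintype.card β < Fintype.card α)
    (f : alternatingGroup α →* Equiv.Perm β) (x : alternatingGroup α) : f x = 1 := by
  classical
  have : IsSimpleGroup (alternatingGroup α) :=
    alternatingGroup.isSimpleGroup (by rwa [Nat.card_eq_fintype_card])
  have : Nontrivial α := Fintype.one_lt_card_iff_nontrivial.1 (by omega)
  rcases (inferInstance : f.ker.Normal).eq_bot_or_eq_top with h | h
  · have hinj : Function.Injective f := (MonoidHom.ker_eq_bot_iff f).1 h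
    have h1 := Fintype.card_le_of_injective f hinj
    have h2 := two_mul_card_alternatingGroup (α := α)
    rw [Fintype.card_perm] at h1 h2
    obtain ⟨n, hn⟩ : ∃ n, Fintype.card α = n + 1 := ⟨Fintype.card α - 1, by omega⟩
    have h3 : (Fintype.card β).factorial ≤ n.factorial := Nat.factorial_le (by omega)
    rw [hn, Nat.factorial_succ] at h2
    have h4 := Nat.factorial_pos n
    have h6 : 5 * n.factorial ≤ (n + 1) * n.factorial := Nat.mul_le_mul_right _ (by omega)
    omega
  · exact (MonoidHom.mem_ker).1 (h ▸ Subgroup.mem_top x)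

/-- The alternating group of degree at least `3` is transitive. -/
lemma exists_even_apply_eq {m : ℕ} (hm : 3 ≤ m) (i j : Fin m) :
    ∃ σ ∈ alternatingGroup (Fin m), σ i = j := by
  by_cases hij : i = j
  · exact ⟨1, one_mem _, by simpa using hij⟩
  obtain ⟨k, hk⟩ : ∃ k, k ∉ ({i, j} : Finset (Fin m)) := by
    by_contra! h
    have h1 := Finset.card_le_card (fun x _ => h x : (Finset.univ : Finset (Fin m)) ⊆ {i, j})
    have h2 := Finset.card_le_two (a := i) (b := j)
    simp at h1
    omega
  simp only [Finset.mem_insert, Finset.mem_singleton, not_or] at hk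
  refine ⟨Equiv.swap j i * Equiv.swap j k, ?_, ?_⟩
  · rw [Equiv.Perm.mem_alternatingGroup, map_mul, Equiv.Perm.sign_swap (Ne.symm hij),
      Equiv.Perm.sign_swap (Ne.symm hk.2)]
    simp
  · rw [Equiv.Perm.mul_apply, Equiv.swap_apply_of_ne_of_ne hij (Ne.symm hk.1),
      Equiv.swap_apply_right]

variable {m : ℕ} {Q : Type*}

/-! ### Distances and cells -/

section Distance

lemma toPerm_apply_apply (g : Fin m → Equiv.Perm Q) (σ : Equiv.Perm (Fin m))
    (α : Fin m → Q) (i : Fin m) : toPerm g σ α (σ i) = g i (α i) := by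
  simp

variable [DecidableEq Q]

lemma hammingDist_toPerm (g : Fin m → Equiv.Perm Q) (σ : Equiv.Perm (Fin m))
    (α β : Fin m → Q) : hammingDist (toPerm g σ α) (toPerm g σ β) = hammingDist α β := by
  unfold hammingDist
  refine Finset.card_equiv σ⁻¹ fun i => ?_
  simp

lemma exists_dist_eq {C : Set (Fin m → Q)} (hC : C.Nonempty) (γ : Fin m → Q) :
    ∃ β ∈ C, hammingDist γ β = distTo C γ := by
  obtain ⟨β, hβ⟩ := hC
  exact Nat.sInf_mem (s := {d | ∃ β ∈ C, hammingDist γ β = d}) ⟨_, β, hβ, rfl⟩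

lemma distTo_le {C : Set (Fin m → Q)} {β : Fin m → Q} (hβ : β ∈ C) (γ : Fin m → Q) :
    distTo C γ ≤ hammingDist γ β := Nat.sInf_le ⟨β, hβ, rfl⟩

lemma distTo_eq_zero {C : Set (Fin m → Q)} (hC : C.Nonempty) {γ : Fin m → Q} :
    distTo C γ = 0 ↔ γ ∈ C := by
  constructor
  · intro h
    obtain ⟨β, hβ, hd⟩ := exists_dist_eq hC γ
    rw [h, hammingDist_eq_zero] at hd
    exact hd ▸ hβ
  · intro h
    have := distTo_le h γ
    rw [hammingDist_self] at this
    omega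

lemma distTo_le_card {C : Set (Fin m → Q)} (hC : C.Nonempty) (γ : Fin m → Q) :
    distTo C γ ≤ m := by
  obtain ⟨β, hβ, hd⟩ := exists_dist_eq hC γ
  rw [← hd]
  simpa using hammingDist_le_card_fintype (x := γ) (y := β)

lemma hammingDist_update_self {α : Fin m → Q} {l : Fin m} {a : Q} (ha : a ≠ α l) :
    hammingDist (Function.update α l a) α = 1 := by
  unfold hammingDist
  rw [Finset.card_eq_one]
  refine ⟨l, ?_⟩
  ext i
  by_cases h : i = l
  · subst h; simpa using ha
  · simp [h]

/-- The cells of a completely transitive code are orbits: two vertices at equal distance from the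
code are in the same orbit. -/
lemma IsCT.exists_map {C : Set (Fin m → Q)} (hC : C.Nonempty)
    {X : Subgroup (Equiv.Perm (Fin m → Q))} (hCT : IsCT C X) {v w : Fin m → Q}
    (h : distTo C v = distTo C w) : ∃ x ∈ X, x v = w := by
  have hle : distTo C v ≤ covRad C := by
    refine le_csSup ⟨m, ?_⟩ ⟨v, rfl⟩
    rintro _ ⟨γ, rfl⟩
    exact distTo_le_card hC γ
  obtain ⟨γ, hγ⟩ := hCT _ hle
  have hv : v ∈ cell C (distTo C v) := rfl
  have hw : w ∈ cell C (distTo C v) := h.symm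
  rw [hγ] at hv hw
  obtain ⟨x, hx, rfl⟩ := hv
  obtain ⟨y, hy, rfl⟩ := hw
  exact ⟨y * x⁻¹, X.mul_mem hy (X.inv_mem hx), by simp⟩

/-- The group preserves the code, since the code is the cell at distance `0`. -/
lemma IsCT.map_mem {C : Set (Fin m → Q)}
    {X : Subgroup (Equiv.Perm (Fin m → Q))} (hCT : IsCT C X) {x : Equiv.Perm (Fin m → Q)}
    (hx : x ∈ X) {v : Fin m → Q} (hv : v ∈ C) : x v ∈ C := by
  have hC : C.Nonempty := ⟨v, hv⟩
  obtain ⟨γ, hγ⟩ := hCT 0 (Nat.zero_le _)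
  have hcell : cell C 0 = C := by
    ext w
    exact distTo_eq_zero hC
  rw [hcell] at hγ
  rw [hγ] at hv ⊢
  obtain ⟨y, hy, rfl⟩ := hv
  exact ⟨x * y, X.mul_mem hx hy, rfl⟩

end Distance

/-! ### Trivial intersection with the base group -/

lemma toPerm_left_injective {g h : Fin m → Equiv.Perm Q} {σ : Equiv.Perm (Fin m)}
    (e : toPerm g σ = toPerm h σ) : g = h := by
  funext i
  ext a
  have := congrFun (congrArg (fun x : Equiv.Perm (Fin m → Q) => x fun _ => a) e) (σ i)
  simpa using this

/-- If `X ∩ B = 1`, an element of `X` is determined by its permutation of the coordinates. -/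
lemma base_unique {X : Subgroup (Equiv.Perm (Fin m → Q))} (hXB : X ⊓ BaseG m Q = ⊥)
    {g h : Fin m → Equiv.Perm Q} {σ : Equiv.Perm (Fin m)} (hg : toPerm g σ ∈ X)
    (hh : toPerm h σ ∈ X) : g = h := by
  apply toPerm_left_injective (σ := σ)
  rw [← mul_inv_eq_one, ← Subgroup.mem_bot, ← hXB]
  refine ⟨X.mul_mem hg (X.inv_mem hh), ?_⟩
  rw [toPerm_inv, toPerm_mul, mul_inv_cancel]
  exact ⟨_, rfl⟩

/-- The vertices inject into pairs (distance to the code, permutation of the coordinates), so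
`q ^ m ≤ (m + 1)!`; for `m ≥ 5` this forces `q ≤ m - 2`. -/
lemma card_lt [Fintype Q] [DecidableEq Q] (hm : 5 ≤ m) {C : Set (Fin m → Q)} (hC : C.Nonempty)
    {X : Subgroup (Equiv.Perm (Fin m → Q))} (hX : X ≤ AutG m Q)
    (hXB : X ⊓ BaseG m Q = ⊥) (hCT : IsCT C X) : Fintype.card Q + 1 < m := by
  have : Nonempty (Fin m → Q) := ⟨hC.some⟩
  have key : ∀ v : Fin m → Q, ∃ σ : Equiv.Perm (Fin m), ∃ g, toPerm g σ ∈ X ∧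
      toPerm g σ (Function.invFun (distTo C) (distTo C v)) = v := by
    intro v
    obtain ⟨x, hx, hxv⟩ := hCT.exists_map hC
      (Function.invFun_eq (f := distTo C) (b := distTo C v) ⟨v, rfl⟩)
    obtain ⟨g, σ, rfl⟩ := hX hx
    exact ⟨σ, g, hx, hxv⟩
  choose s g hs hv using key
  have hinj : Function.Injective (fun v : Fin m → Q =>
      ((⟨distTo C v, Nat.lt_succ_of_le (distTo_le_card hC v)⟩ : Fin (m + 1)), s v)) := by
    intro v w hvw
    simp only [Prod.mk.injEq, Fin.mk.injEq] at hvw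
    obtain ⟨h1, h2⟩ := hvw
    have h3 : g v = g w := base_unique hXB (σ := s v) (hs v) (h2 ▸ hs w)
    rw [← hv v, ← hv w, h1, h2, h3]
  have hcard := Fintype.card_le_of_injective _ hinj
  rw [Fintype.card_prod, Fintype.card_perm, Fintype.card_fun, Fintype.card_fin, Fintype.card_fin,
    ← Nat.factorial_succ] at hcard
  by_contra! hcon
  obtain ⟨n, rfl⟩ : ∃ n, m = n + 1 := ⟨m - 1, by omega⟩
  have h1 : (n + 1 + 1).factorial < n ^ (n + 1) := factorial_lt_pow n (by omega)
  have h2 : n ^ (n + 1) ≤ Fintype.card Q ^ (n + 1) := Nat.pow_le_pow_left (by omega) _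
  omega

/-! ### Even elements fix every codeword -/

/-- The permutations of the coordinates induced by elements of `X` that fix every codeword. -/
def FixGroup (C : Set (Fin m → Q)) (X : Subgroup (Equiv.Perm (Fin m → Q))) :
    Subgroup (Equiv.Perm (Fin m)) where
  carrier := {σ | ∃ g, toPerm g σ ∈ X ∧ ∀ α ∈ C, toPerm g σ α = α}
  one_mem' := ⟨fun _ => 1, by rw [toPerm_one]; exact X.one_mem, by simp [toPerm_one]⟩
  mul_mem' := by
    rintro σ τ ⟨g, hg, hg'⟩ ⟨h, hh, hh'⟩
    refine ⟨fun j => g (τ j) * h j, by rw [← toPerm_mul]; exact X.mul_mem hg hh, fun α hα => ?_⟩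
    rw [← toPerm_mul, Equiv.Perm.mul_apply, hh' α hα, hg' α hα]
  inv_mem' := by
    rintro σ ⟨g, hg, hg'⟩
    refine ⟨fun i => (g (σ⁻¹ i))⁻¹, by rw [← toPerm_inv]; exact X.inv_mem hg, fun α hα => ?_⟩
    rw [← toPerm_inv, Equiv.Perm.inv_eq_iff_eq, hg' α hα]

lemma alternating_le_fixGroup [Fintype Q] [DecidableEq Q] (hm : 5 ≤ m)
    {C : Set (Fin m → Q)} (hC : C.Nonempty)
    (hsep : ∀ α ∈ C, ∀ β ∈ C, hammingDist α β < 5 → α = β)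
    {X : Subgroup (Equiv.Perm (Fin m → Q))} (hX : X ≤ AutG m Q)
    (hXB : X ⊓ BaseG m Q = ⊥) (hCT : IsCT C X)
    (hA : alternatingGroup (Fin m) ≤ ProjGroup X) :
    alternatingGroup (Fin m) ≤ FixGroup C X := by
  classical
  have hq := card_lt hm hC hX hXB hCT
  have key : ∀ σ : alternatingGroup (Fin m), ∃ g, toPerm g σ.1 ∈ X := fun σ => hA σ.2
  choose G hG using key
  have hmul : ∀ σ τ, G (σ * τ) = fun j => G σ (τ.1 j) * G τ j := by
    intro σ τ
    refine base_unique hXB (hG _) ?_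
    have := X.mul_mem (hG σ) (hG τ)
    rwa [toPerm_mul] at this
  rcases hm.eq_or_lt with rfl | hm6
  -- distinct codewords differ in every coordinate, so there are at most `q < 5` of them
  · have hinj : Function.Injective (fun α : C => α.1 0) := by
      intro α β h
      apply Subtype.ext
      apply hsep _ α.2 _ β.2
      unfold hammingDist
      calc _ < (Finset.univ : Finset (Fin 5)).card := by
            apply Finset.card_lt_card
            rw [Finset.ssubset_univ_iff]
            intro hu
            have : (0 : Fin 5) ∈ (Finset.univ : Finset (Fin 5)) := Finset.mem_univ _
            rw [← hu] at this
            simp at this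
            exact this h
        _ = 5 := by simp
    have hcardC := Fintype.card_le_of_injective _ hinj
    have hiff : ∀ σ v, v ∈ C ↔ toPerm (G σ) σ.1 v ∈ C := by
      intro σ v
      refine ⟨fun h => hCT.map_mem (hG σ) h, fun h => ?_⟩
      simpa using hCT.map_mem (X.inv_mem (hG σ)) h
    let f : alternatingGroup (Fin 5) →* Equiv.Perm C := MonoidHom.mk'
      (fun σ => (toPerm (G σ) σ.1).subtypePerm fun v => (hiff σ v).symm) (by
        intro σ τ
        ext v : 2
        simp only [Equiv.Perm.subtypePerm_apply, Equiv.Perm.mul_apply]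
        rw [← Equiv.Perm.mul_apply, toPerm_mul, hmul]
        rfl)
    intro σ hσ
    refine ⟨G ⟨σ, hσ⟩, hG ⟨σ, hσ⟩, fun α hα => ?_⟩
    have h1 := alternating_hom_trivial (by simp) (by rw [Fintype.card_fin]; omega) f ⟨σ, hσ⟩
    have h2 := congrArg (fun p : Equiv.Perm C => (p ⟨α, hα⟩).1) h1
    exact h2
  -- the even elements fixing a coordinate `l` act on its alphabet through a trivial hom
  · have htriv : ∀ (l : Fin m) (σ : alternatingGroup (Fin m)), σ.1 l = l → G σ l = 1 := by
      intro l σ hσ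
      let s : Finset (Fin m) := Finset.univ.erase l
      have hfix : ∀ τ : alternatingGroup s, (alternatingGroup.ofSubtype s τ).1 l = l := by
        intro τ
        rw [alternatingGroup.coe_ofSubtype]
        exact Equiv.Perm.ofSubtype_apply_of_not_mem _ (by simp [s])
      let f : alternatingGroup s →* Equiv.Perm Q := MonoidHom.mk'
        (fun τ => G (alternatingGroup.ofSubtype s τ) l) (by
          intro τ τ'
          rw [map_mul, hmul]
          simp only [hfix])
      have hs : Fintype.card s = m - 1 := by simp [s]
      have hmem : σ ∈ (alternatingGroup.ofSubtype s).range := by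
        rw [alternatingGroup.mem_range_ofSubtype_iff]
        intro i hi
        simp only [s, Finset.mem_erase, Finset.mem_univ, and_true]
        rintro rfl
        simp [hσ] at hi
      obtain ⟨τ, rfl⟩ := hmem
      exact alternating_hom_trivial (by omega) (by omega) f τ
    rw [← Equiv.Perm.closure_three_cycles_eq_alternating, Subgroup.closure_le]
    intro σ hσ
    have hσA := Equiv.Perm.IsThreeCycle.mem_alternatingGroup hσ
    refine ⟨G ⟨σ, hσA⟩, hG ⟨σ, hσA⟩, fun α hα => ?_⟩
    -- a `3`-cycle moves a codeword only in three coordinates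
    refine hsep _ (hCT.map_mem (hG ⟨σ, hσA⟩) hα) _ hα ?_
    have h3 : σ.support.card = 3 := Equiv.Perm.IsThreeCycle.card_support hσ
    refine lt_of_le_of_lt (b := σ.support.card) (Finset.card_le_card fun i hi => ?_) (by omega)
    rw [Equiv.Perm.mem_support]
    intro hfix
    have hinv : σ⁻¹ i = i := by rw [Equiv.Perm.inv_eq_iff_eq, hfix]
    refine (Finset.mem_filter.1 hi).2 ?_
    rw [toPerm_apply, hinv, htriv i ⟨σ, hσA⟩ hfix, Equiv.Perm.one_apply]

end CTC

open CTC in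
/-- Proposition 3.2: an `X`-completely transitive code with
`δ ≥ 5`, `X ∩ B = 1` and `μ(X)` equal to `Alt(Fin m)` or `Sym(Fin m)` forces
`q = 2`, `μ(X) = Sym(Fin m)`, `C` equivalent to `Rep(m,2)` and
`μ(X_α) = Alt(Fin m)` for all `α ∈ C`. -/
theorem statement14 {m q : ℕ} {Q : Type*} [Fintype Q] [DecidableEq Q]
    (hm : 2 ≤ m) (hq2 : 2 ≤ q) (hcard : Fintype.card Q = q)
    (C : Set (Fin m → Q)) (hC : 1 < C.ncard)
    (δ : ℕ) (hδ : IsMinDist C δ) (hδ5 : 5 ≤ δ)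
    (X : Subgroup (Equiv.Perm (Fin m → Q))) (hX : X ≤ AutG m Q)
    (hXB : X ⊓ BaseG m Q = ⊥) (hCT : IsCT C X)
    (halt : ProjGroup X = alternatingGroup (Fin m) ∨
            ProjGroup X = (⊤ : Subgroup (Equiv.Perm (Fin m)))) :
    q = 2 ∧ ProjGroup X = (⊤ : Subgroup (Equiv.Perm (Fin m))) ∧
    CodeEquiv C (RepCode m Q) ∧
    ∀ α ∈ C,
      {σ : Equiv.Perm (Fin m) | ∃ g, toPerm g σ ∈ X ∧ toPerm g σ α = α} =
        ↑(alternatingGroup (Fin m)) := by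
  have hsep : ∀ α ∈ C, ∀ β ∈ C, hammingDist α β < 5 → α = β := by
    intro α hα β hβ h
    by_contra hne
    have := hδ.2 ⟨α, hα, β, hβ, hne, rfl⟩
    omega
  have hfin : C.Finite := Set.toFinite C
  obtain ⟨α, β, hα, hβ, hαβ⟩ := (Set.one_lt_ncard_iff hfin).1 hC
  have hne : C.Nonempty := ⟨α, hα⟩
  have hm5 : 5 ≤ m := by
    by_contra! h
    have : hammingDist α β ≤ m := by simpa using hammingDist_le_card_fintype (x := α) (y := β)
    exact hαβ (hsep α hα β hβ (by omega))
  have hA : alternatingGroup (Fin m) ≤ ProjGroup X := by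
    rcases halt with h | h <;> rw [h]
    exact le_top
  have hFix := alternating_le_fixGroup hm5 hne hsep hX hXB hCT hA
  have heven : ∀ g σ, toPerm g σ ∈ X → σ ∈ alternatingGroup (Fin m) →
      ∀ γ ∈ C, toPerm g σ γ = γ := by
    intro g σ hx hσ γ hγ
    obtain ⟨h, hh, hfix⟩ := hFix hσ
    rw [base_unique hXB hx hh]
    exact hfix γ hγ
  have htrans : ∀ γ ∈ C, ∀ γ' ∈ C, ∃ g σ, toPerm g σ ∈ X ∧ toPerm g σ γ = γ' := by
    intro γ hγ γ' hγ'
    obtain ⟨x, hx, hxγ⟩ := hCT.exists_map hne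
      (((distTo_eq_zero hne).2 hγ).trans ((distTo_eq_zero hne).2 hγ').symm)
    obtain ⟨g, σ, rfl⟩ := hX hx
    exact ⟨g, σ, hx, hxγ⟩
  have hodd : ∀ σ τ : Equiv.Perm (Fin m), σ ∉ alternatingGroup (Fin m) →
      τ ∉ alternatingGroup (Fin m) → σ * τ ∈ alternatingGroup (Fin m) := by
    intro σ τ hσ hτ
    rw [Equiv.Perm.mem_alternatingGroup] at *
    rw [map_mul, (Int.units_eq_one_or _).resolve_left hσ, (Int.units_eq_one_or _).resolve_left hτ]
    rfl
  have htop : ProjGroup X = ⊤ := by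
    refine halt.resolve_left fun h => ?_
    obtain ⟨g, σ, hx, hxα⟩ := htrans α hα β hβ
    have hσ : σ ∈ ProjGroup X := ⟨g, hx⟩
    exact hαβ ((heven g σ hx (h ▸ hσ) α hα).symm.trans hxα)
  have hstab : ∀ γ ∈ C, ∀ g σ, toPerm g σ ∈ X → toPerm g σ γ = γ →
      σ ∈ alternatingGroup (Fin m) := by
    intro γ hγ g σ hx hxγ
    by_contra hσ
    obtain ⟨γ', hγ', hγγ'⟩ : ∃ γ' ∈ C, γ' ≠ γ := by
      by_cases h : γ = α
      · exact ⟨β, hβ, fun h' => hαβ (h.symm.trans h'.symm)⟩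
      · exact ⟨α, hα, Ne.symm h⟩
    obtain ⟨g', σ', hy, hyγ⟩ := htrans γ hγ γ' hγ'
    have hσ' : σ' ∉ alternatingGroup (Fin m) := fun h =>
      hγγ' (hyγ.symm.trans (heven g' σ' hy h γ hγ))
    have hyx := X.mul_mem hy hx
    have hmap : (toPerm g' σ' * toPerm g σ) γ = γ' := by
      rw [Equiv.Perm.mul_apply, hxγ, hyγ]
    rw [toPerm_mul] at hyx hmap
    exact hγγ' (hmap.symm.trans (heven _ _ hyx (hodd _ _ hσ' hσ) γ hγ))
  have htwo : ∀ γ ∈ C, γ = α ∨ γ = β := by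
    intro γ hγ
    by_contra! hcon
    obtain ⟨g, σ, hx, hxα⟩ := htrans α hα β hβ
    obtain ⟨g', σ', hy, hyβ⟩ := htrans β hβ γ hγ
    have hσ : σ ∉ alternatingGroup (Fin m) := fun h =>
      hαβ ((heven g σ hx h α hα).symm.trans hxα)
    have hσ' : σ' ∉ alternatingGroup (Fin m) := fun h =>
      hcon.2 (hyβ.symm.trans (heven g' σ' hy h β hβ))
    have hyx := X.mul_mem hy hx
    have hmap : (toPerm g' σ' * toPerm g σ) α = γ := by
      rw [Equiv.Perm.mul_apply, hxα, hyβ]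
    rw [toPerm_mul] at hyx hmap
    exact hcon.1 (hmap.symm.trans (heven _ _ hyx (hodd _ _ hσ' hσ) α hα))
  -- transitivity of `Alt(m)` spreads one coordinate of disagreement to all coordinates
  have hdiff : ∀ i, α i ≠ β i := by
    intro i
    obtain ⟨i₀, hi₀⟩ := Function.ne_iff.1 hαβ
    obtain ⟨σ, hσ, rfl⟩ := exists_even_apply_eq (by omega) i₀ i
    obtain ⟨g, -, hfix⟩ := hFix hσ
    have h1 := congrFun (hfix α hα) (σ i₀)
    have h2 := congrFun (hfix β hβ) (σ i₀)
    rw [toPerm_apply_apply] at h1 h2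
    rw [← h1, ← h2]
    exact fun h => hi₀ ((g i₀).injective h)
  have hcell : ∀ l a, a ≠ α l → distTo C (Function.update α l a) = 1 := by
    intro l a ha
    have h1 := hammingDist_update_self ha
    have h2 := distTo_le hα (Function.update α l a)
    have h3 : distTo C (Function.update α l a) ≠ 0 := by
      rw [Ne, distTo_eq_zero hne]
      intro hmem
      rw [hsep _ hmem α hα (by omega), hammingDist_self] at h1
      omega
    omega
  -- transitivity on the neighbours of the code leaves no third letter in any coordinate
  have hletters : ∀ l c, c = α l ∨ c = β l := by
    intro l c
    by_contra! hcon
    obtain ⟨x, hx, hxm⟩ := hCT.exists_map hne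
      ((hcell l (β l) (hdiff l).symm).trans (hcell l c hcon.1).symm)
    obtain ⟨g, σ, rfl⟩ := hX hx
    have hxα : toPerm g σ α = α := by
      apply hsep _ (hCT.map_mem hx hα) _ hα
      have h1 := hammingDist_toPerm g σ α (Function.update α l (β l))
      rw [hxm, hammingDist_comm α, hammingDist_update_self (hdiff l).symm] at h1
      have h2 := hammingDist_update_self hcon.1
      have h3 := hammingDist_triangle (toPerm g σ α) (Function.update α l c) α
      omega
    have hxβ := heven g σ hx (hstab α hα g σ hx hxα) β hβ
    have e1 := congrFun hxm (σ l)
    have e2 := congrFun hxα (σ l)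
    have e3 := congrFun hxβ (σ l)
    rw [toPerm_apply_apply] at e1 e2 e3
    rw [Function.update_self] at e1
    have hσl : σ l = l := by
      by_contra h
      rw [Function.update_of_ne h, ← e2] at e1
      exact hdiff l ((g l).injective e1).symm
    rw [hσl] at e1 e3
    rw [Function.update_self, e3] at e1
    exact hcon.2 e1.symm
  let o : Fin m := ⟨0, by omega⟩
  refine ⟨?_, htop, ?_, ?_⟩
  · rw [← hcard, ← Finset.card_univ, ← Finset.card_pair (hdiff o)]
    congr 1
    ext c
    simpa using hletters o c
  · have hαmap : toPerm (fun i => Equiv.swap (α i) (α o)) 1 α = fun _ => α o := by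
      funext i
      simp
    have hβmap : toPerm (fun i => Equiv.swap (α i) (α o)) 1 β = fun _ => β o := by
      funext i
      refine (hletters o _).resolve_left fun h => hdiff i ?_
      simp only [toPerm_apply, inv_one, Equiv.Perm.one_apply] at h
      rw [Equiv.swap_apply_eq_iff, Equiv.swap_apply_right] at h
      exact h.symm
    refine ⟨_, ⟨fun i => Equiv.swap (α i) (α o), 1, rfl⟩, ?_⟩
    ext v
    constructor
    · rintro ⟨γ, hγ, rfl⟩
      rcases htwo γ hγ with rfl | rfl
      · exact ⟨_, hαmap⟩
      · exact ⟨_, hβmap⟩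
    · rintro ⟨a, rfl⟩
      rcases hletters o a with rfl | rfl
      · exact ⟨α, hα, hαmap⟩
      · exact ⟨β, hβ, hβmap⟩
  · intro γ hγ
    ext σ
    constructor
    · rintro ⟨g, hx, hxγ⟩
      exact hstab γ hγ g σ hx hxγ
    · intro hσ
      obtain ⟨g, hx, hfix⟩ := hFix hσ
      exact ⟨g, hx, hfix γ hγ⟩
end
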